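/- Let N be a positive integer and p a real number with 1 < p and 2p < N. Then every C^∞ compactly supported function φ : ℝ^N → ℝ satisfies the Rellich inequality ∫_{ℝ^N} |φ(x)|^p / |x|^{2p} dx ≤ (p²/(N(p−1)(N−2p)))^p · ∫_{ℝ^N} |Δφ(x)|^p dx, where Δφ denotes the Laplacian of φ. -/

import Mathlib

/-!
Put `s = ‖x‖² + δ` and `w = H ∘ φ`, with `H` a smooth substitute for `|t| ^ p`. Integrating by parts
against `∇ w` and against `w x`, and writing `X = ∫ s ^ (-p) (x · ∇w)`, one finds
`∫ s ^ (1 - p) Δw = 2 (p - 1) X` and `(N - 2p) ∫ s ^ (-p) w ≤ -X`. On the other hand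
`Δw = H''(φ) |∇φ|² + H'(φ) Δφ`, and convexity of `H ^ (1 / p)` makes
`H''(φ) u² + 2 (p - 1) c H'(φ) u + p (p - 1) c² H(φ)` nonnegative for all `u` and `c`. Taking
`u = x · ∇φ` bounds `s ^ (1 - p) H''(φ) |∇φ|²` below by multiples of `s ^ (-p) (x · ∇w)` and
`s ^ (-p) w`, so that with `c = (N - 2p) / p`
`(N (p - 1) (N - 2p) / p) ∫ s ^ (-p) w ≤ -∫ s ^ (1 - p) H'(φ) Δφ`. Young's inequality absorbs
`H'(φ)` into the left-hand side, and Fatou's lemma removes the regularisation.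
-/

open MeasureTheory

/-- The Laplacian of a function `φ : ℝ^N → ℝ`, as the sum of its pure second
partial derivatives in the coordinate directions. -/
noncomputable def lap {N : ℕ} (φ : EuclideanSpace ℝ (Fin N) → ℝ)
    (x : EuclideanSpace ℝ (Fin N)) : ℝ :=
  ∑ i : Fin N, iteratedFDeriv ℝ 2 φ x ![EuclideanSpace.single i 1, EuclideanSpace.single i 1]

open Module InnerProductSpace Filter Topology
open scoped Gradient Laplacian

section RealInequalities

lemma quadratic_nonneg_of_sq_le_mul {a b c : ℝ} (ha : 0 ≤ a) (hc : 0 ≤ c) (h : b ^ 2 ≤ a * c)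
    (u : ℝ) : 0 ≤ a * u ^ 2 + 2 * b * u + c := by
  obtain rfl | ha := ha.eq_or_lt
  · obtain rfl : b = 0 := by nlinarith
    simpa using hc
  · refine nonneg_of_mul_nonneg_right (a := a) ?_ ha
    linarith [sq_nonneg (a * u + b),
      show a * (a * u ^ 2 + 2 * b * u + c) = (a * u + b) ^ 2 + (a * c - b ^ 2) by ring]

lemma young_inequality_rpow_sub_one {a b k p : ℝ} (ha : 0 ≤ a) (hb : 0 ≤ b) (hk : 0 < k)
    (hp : 1 < p) : p * (a ^ (p - 1) * b) ≤ (p - 1) * k * a ^ p + k * (b / k) ^ p := by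
  have hp0 : p ≠ 0 := by positivity
  have hp1 : p - 1 ≠ 0 := (sub_pos.2 hp).ne'
  have hpq : (p / (p - 1)).HolderConjugate p := (Real.HolderConjugate.conjExponent hp).symm
  have hy := Real.young_inequality_of_nonneg (Real.rpow_nonneg ha (p - 1))
    (div_nonneg hb hk.le) hpq
  rw [← Real.rpow_mul ha, mul_div_cancel₀ _ hp1] at hy
  calc p * (a ^ (p - 1) * b) = p * k * (a ^ (p - 1) * (b / k)) := by field_simp
    _ ≤ p * k * (a ^ p / (p / (p - 1)) + (b / k) ^ p / p) := by gcongr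
    _ = (p - 1) * k * a ^ p + k * (b / k) ^ p := by field_simp

end RealInequalities

lemma integrable_and_integral_le_of_tendsto_of_integral_le {α : Type*} [MeasurableSpace α]
    {μ : Measure α} {f : ℕ → α → ℝ} {F : α → ℝ} {C : ℝ} (hint : ∀ n, Integrable (f n) μ)
    (hf : ∀ n x, 0 ≤ f n x) (hlim : ∀ᵐ x ∂μ, Tendsto (fun n ↦ f n x) atTop (𝓝 (F x)))
    (hle : ∀ n, ∫ x, f n x ∂μ ≤ C) : Integrable F μ ∧ ∫ x, F x ∂μ ≤ C := by
  have hC : 0 ≤ C := (integral_nonneg (hf 0)).trans (hle 0)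
  have hmeas : AEStronglyMeasurable F μ :=
    aestronglyMeasurable_of_tendsto_ae atTop (fun n ↦ (hint n).1) hlim
  have hF : 0 ≤ᵐ[μ] F := hlim.mono fun x hx ↦ ge_of_tendsto' hx fun n ↦ hf n x
  have hfatou : ∫⁻ x, ENNReal.ofReal (F x) ∂μ ≤ ENNReal.ofReal C := calc
    _ = ∫⁻ x, liminf (fun n ↦ ENNReal.ofReal (f n x)) atTop ∂μ :=
      lintegral_congr_ae <| hlim.mono fun x hx ↦ (ENNReal.tendsto_ofReal hx).liminf_eq.symm
    _ ≤ liminf (fun n ↦ ∫⁻ x, ENNReal.ofReal (f n x) ∂μ) atTop :=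
      lintegral_liminf_le' fun n ↦ (hint n).1.aemeasurable.ennreal_ofReal
    _ ≤ ENNReal.ofReal C := by
      refine liminf_le_of_le (by isBoundedDefault) fun y hy ↦ ?_
      obtain ⟨n, hn⟩ := hy.exists
      rw [← ofReal_integral_eq_lintegral_ofReal (hint n) (.of_forall (hf n))] at hn
      exact hn.trans (ENNReal.ofReal_le_ofReal (hle n))
  refine ⟨⟨hmeas, (hasFiniteIntegral_iff_ofReal hF).2 (hfatou.trans_lt ENNReal.ofReal_lt_top)⟩, ?_⟩
  rw [integral_eq_lintegral_of_nonneg_ae hF hmeas]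
  exact ENNReal.toReal_le_of_le_ofReal hC hfatou

section Divergence

variable {E : Type*} [NormedAddCommGroup E] [NormedSpace ℝ E]

lemma continuous_fderiv_apply_self {f : E → ℝ} (hf : ContDiff ℝ 1 f) :
    Continuous fun x ↦ fderiv ℝ f x x :=
  (hf.continuous_fderiv one_ne_zero).clm_apply continuous_id

lemma hasCompactSupport_fderiv_apply_self {f : E → ℝ} (hf : HasCompactSupport f) :
    HasCompactSupport fun x ↦ fderiv ℝ f x x :=
  (hf.fderiv (𝕜 := ℝ)).mono fun x hx h ↦ hx (by simp [h])

/-- The divergence of a vector field `V`, encoded without coordinates as the trace of its Fréchet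
derivative. -/
noncomputable def divergence (V : E → E) (x : E) : ℝ :=
  LinearMap.trace ℝ E (fderiv ℝ V x)

lemma hasCompactSupport_divergence {V : E → E} (hV : HasCompactSupport V) :
    HasCompactSupport (divergence V) :=
  (hV.fderiv (𝕜 := ℝ)).comp_left
    (g := fun T : E →L[ℝ] E ↦ LinearMap.trace ℝ E T) (by simp)

variable [FiniteDimensional ℝ E]

lemma divergence_smul {f : E → ℝ} {V : E → E} {x : E} (hf : DifferentiableAt ℝ f x)
    (hV : DifferentiableAt ℝ V x) :
    divergence (fun y ↦ f y • V y) x = f x * divergence V x + fderiv ℝ f x (V x) := by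
  simp [divergence, fderiv_fun_smul hf hV]

lemma divergence_id (x : E) : divergence (fun y : E ↦ y) x = finrank ℝ E := by
  simp [divergence]

lemma divergence_eq_sum_fderiv_coord {ι : Type*} [Fintype ι] (b : Basis ι ℝ E) {V : E → E} {x : E}
    (hV : DifferentiableAt ℝ V x) :
    divergence V x = ∑ i, fderiv ℝ (fun y ↦ b.coord i (V y)) x (b i) := by
  classical
  have hcoord (i) : fderiv ℝ (fun y ↦ b.coord i (V y)) x =
      (b.coord i).toContinuousLinearMap ∘L fderiv ℝ V x :=
    ((b.coord i).toContinuousLinearMap.hasFDerivAt.comp x hV.hasFDerivAt).fderiv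
  simp_rw [hcoord]
  simp [divergence, LinearMap.trace_eq_matrix_trace ℝ b, Matrix.trace, LinearMap.toMatrix_apply]

lemma continuous_divergence {V : E → E} (hV : ContDiff ℝ 1 V) : Continuous (divergence V) := by
  unfold divergence
  exact (LinearMap.continuous_of_finiteDimensional
    (LinearMap.trace ℝ E ∘ₗ ContinuousLinearMap.coeLM ℝ)).comp (hV.continuous_fderiv one_ne_zero)

variable [MeasurableSpace E] [BorelSpace E] {μ : Measure E} [μ.IsAddHaarMeasure]

lemma integral_fderiv_apply_eq_zero {f : E → ℝ} (hf : ContDiff ℝ 1 f) (hc : HasCompactSupport f)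
    (v : E) : ∫ x, fderiv ℝ f x v ∂μ = 0 := by
  have hint : Integrable (fun x ↦ fderiv ℝ f x v) μ :=
    ((hf.continuous_fderiv one_ne_zero).clm_apply continuous_const).integrable_of_hasCompactSupport
      (hc.fderiv_apply (𝕜 := ℝ) v)
  simpa using integral_mul_fderiv_eq_neg_fderiv_mul_of_integrable (μ := μ) (f := f)
    (g := fun _ ↦ (1 : ℝ)) (v := v) (by simpa using hint) (by simp)
    (by simpa using hf.continuous.integrable_of_hasCompactSupport hc)
    (fun x _ ↦ hf.differentiable one_ne_zero x) (fun x _ ↦ differentiableAt_const _)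

lemma integral_divergence_eq_zero {V : E → E} (hV : ContDiff ℝ 1 V) (hc : HasCompactSupport V) :
    ∫ x, divergence V x ∂μ = 0 := by
  let b := finBasis ℝ E
  have hb (i) : ContDiff ℝ 1 (fun x ↦ b.coord i (V x)) :=
    (b.coord i).toContinuousLinearMap.contDiff.comp hV
  have hbc (i) : HasCompactSupport (fun x ↦ b.coord i (V x)) :=
    hc.comp_left (map_zero (b.coord i))
  simp_rw [fun x ↦ divergence_eq_sum_fderiv_coord b (hV.differentiable one_ne_zero x)]
  rw [integral_finsetSum _ fun i _ ↦ ?_]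
  · exact Finset.sum_eq_zero fun i _ ↦ integral_fderiv_apply_eq_zero (hb i) (hbc i) _
  · exact (((hb i).continuous_fderiv one_ne_zero).clm_apply
      continuous_const).integrable_of_hasCompactSupport ((hbc i).fderiv_apply (𝕜 := ℝ) _)

lemma integral_mul_divergence {f : E → ℝ} {V : E → E} (hf : ContDiff ℝ 1 f) (hV : ContDiff ℝ 1 V)
    (hc : HasCompactSupport V) :
    ∫ x, f x * divergence V x ∂μ = -∫ x, fderiv ℝ f x (V x) ∂μ := by
  have hzero := integral_divergence_eq_zero (μ := μ) (hf.smul hV) hc.smul_left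
  have hleft : Integrable (fun x ↦ f x * divergence V x) μ :=
    (hf.continuous.mul (continuous_divergence hV)).integrable_of_hasCompactSupport
      (hasCompactSupport_divergence hc).mul_left
  have hright : Integrable (fun x ↦ fderiv ℝ f x (V x)) μ :=
    ((hf.continuous_fderiv one_ne_zero).clm_apply hV.continuous).integrable_of_hasCompactSupport
      (hc.mono fun x hx h ↦ hx (by simp [h]))
  rw [← add_eq_zero_iff_eq_neg, ← integral_add hleft hright, ← hzero]
  exact integral_congr_ae <| .of_forall fun x ↦ (divergence_smul
    (hf.differentiable one_ne_zero x) (hV.differentiable one_ne_zero x)).symm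

end Divergence

section Gradient

variable {E : Type*} [NormedAddCommGroup E] [InnerProductSpace ℝ E]

lemma contDiff_gradient [CompleteSpace E] {φ : E → ℝ} {m n : WithTop ℕ∞} (hφ : ContDiff ℝ n φ)
    (hmn : m + 1 ≤ n) : ContDiff ℝ m (∇ φ) :=
  (toDual ℝ E).symm.contDiff.comp (hφ.fderiv_right hmn)

lemma hasCompactSupport_gradient [CompleteSpace E] {φ : E → ℝ} (hφ : HasCompactSupport φ) :
    HasCompactSupport (∇ φ) :=
  (hφ.fderiv (𝕜 := ℝ)).comp_left (map_zero (toDual ℝ E).symm)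

variable [FiniteDimensional ℝ E]

lemma divergence_gradient {φ : E → ℝ} (hφ : ContDiff ℝ 2 φ) (x : E) :
    divergence (∇ φ) x = Δ φ x := by
  have hfderiv : DifferentiableAt ℝ (fderiv ℝ φ) x :=
    (hφ.fderiv_right (m := 1) (by norm_num)).differentiable one_ne_zero x
  have hgradient : DifferentiableAt ℝ (∇ φ) x :=
    (contDiff_gradient hφ one_add_one_eq_two.le).differentiable one_ne_zero x
  rw [divergence_eq_sum_fderiv_coord (stdOrthonormalBasis ℝ E).toBasis hgradient,
    laplacian_eq_iteratedFDeriv_stdOrthonormalBasis]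
  simp [iteratedFDeriv_two_apply, OrthonormalBasis.repr_apply_apply, inner_gradient_right,
    fderiv_clm_apply hfderiv]

lemma continuous_laplacian {φ : E → ℝ} (hφ : ContDiff ℝ 2 φ) : Continuous (Δ φ) := by
  rw [← funext (divergence_gradient hφ)]
  exact continuous_divergence (contDiff_gradient hφ one_add_one_eq_two.le)

lemma hasCompactSupport_laplacian {φ : E → ℝ} (hφ : HasCompactSupport φ) :
    HasCompactSupport (Δ φ) := by
  rw [laplacian_eq_iteratedFDeriv_stdOrthonormalBasis]
  exact (hφ.iteratedFDeriv (𝕜 := ℝ) 2).comp_left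
    (g := fun T : E [×2]→L[ℝ] ℝ ↦ ∑ i, T ![stdOrthonormalBasis ℝ E i, stdOrthonormalBasis ℝ E i])
    (by simp)

lemma laplacian_comp {H : ℝ → ℝ} (hH : ContDiff ℝ 2 H) {φ : E → ℝ} (hφ : ContDiff ℝ 2 φ)
    (x : E) :
    Δ (H ∘ φ) x =
      deriv (deriv H) (φ x) * ‖fderiv ℝ φ x‖ ^ 2 + deriv H (φ x) * Δ φ x := by
  have hH' : Differentiable ℝ (deriv H) := (contDiff_succ_iff_deriv.1
    (show ContDiff ℝ (1 + 1) H by rwa [one_add_one_eq_two])).2.2.differentiable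
      one_ne_zero
  have hφ' : Differentiable ℝ φ := hφ.differentiable two_ne_zero
  have hgradφ : ContDiff ℝ 1 (∇ φ) := contDiff_gradient hφ one_add_one_eq_two.le
  have hgradient : ∇ (H ∘ φ) = fun y ↦ deriv H (φ y) • ∇ φ y := by
    funext y
    refine ext_inner_right ℝ fun v ↦ ?_
    rw [inner_smul_left, inner_gradient_left, inner_gradient_left,
      ((hH.differentiable two_ne_zero _).hasDerivAt.comp_hasFDerivAt y (hφ' y).hasFDerivAt).fderiv]
    simp
  have hnorm : fderiv ℝ φ x (∇ φ x) = ‖fderiv ℝ φ x‖ ^ 2 := by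
    rw [← inner_gradient_left, real_inner_self_eq_norm_sq, ← toDual_gradient,
      LinearIsometryEquiv.norm_map]
  have hH'φ : HasFDerivAt (fun y ↦ deriv H (φ y)) (deriv (deriv H) (φ x) • fderiv ℝ φ x) x :=
    (hH' _).hasDerivAt.comp_hasFDerivAt x (hφ' x).hasFDerivAt
  rw [← divergence_gradient (hH.comp hφ), hgradient,
    divergence_smul hH'φ.differentiableAt (hgradφ.differentiable one_ne_zero x),
    divergence_gradient hφ, hH'φ.fderiv]
  simp [hnorm, add_comm]

end Gradient

section NormWeight

variable {E : Type*} [NormedAddCommGroup E] [InnerProductSpace ℝ E]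

lemma contDiff_norm_sq_add_rpow {n : WithTop ℕ∞} {δ : ℝ} (hδ : 0 < δ) (a : ℝ) :
    ContDiff ℝ n fun x : E ↦ (‖x‖ ^ 2 + δ) ^ a :=
  ((contDiff_norm_sq ℝ).add contDiff_const).rpow_const_of_ne fun x ↦ by positivity

lemma fderiv_norm_sq_add_rpow_apply {δ : ℝ} (hδ : 0 < δ) (a : ℝ) (x v : E) :
    fderiv ℝ (fun x : E ↦ (‖x‖ ^ 2 + δ) ^ a) x v =
      2 * a * (‖x‖ ^ 2 + δ) ^ (a - 1) * inner ℝ x v := by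
  have hpos : ‖x‖ ^ 2 + δ ≠ 0 := by positivity
  rw [(((hasStrictFDerivAt_norm_sq x).hasFDerivAt.add_const δ).rpow_const (Or.inl hpos)).fderiv]
  simp
  ring

variable [MeasurableSpace E] [BorelSpace E] {μ : Measure E}

lemma integrable_norm_sq_add_rpow_mul [IsFiniteMeasureOnCompacts μ] {f : E → ℝ} {δ : ℝ}
    (hf : Continuous f) (hc : HasCompactSupport f) (hδ : 0 < δ) (a : ℝ) :
    Integrable (fun x ↦ (‖x‖ ^ 2 + δ) ^ a * f x) μ :=
  ((contDiff_norm_sq_add_rpow (n := 0) hδ a).continuous.mul hf).integrable_of_hasCompactSupport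
    hc.mul_left

variable [FiniteDimensional ℝ E] [μ.IsAddHaarMeasure] {w : E → ℝ} {δ : ℝ}

lemma integral_rpow_mul_laplacian (hw : ContDiff ℝ 2 w) (hc : HasCompactSupport w) (hδ : 0 < δ)
    (p : ℝ) :
    ∫ x, (‖x‖ ^ 2 + δ) ^ (1 - p) * Δ w x ∂μ =
      2 * (p - 1) * ∫ x, (‖x‖ ^ 2 + δ) ^ (-p) * fderiv ℝ w x x ∂μ := by
  simp_rw [← divergence_gradient hw]
  rw [integral_mul_divergence (contDiff_norm_sq_add_rpow hδ (1 - p))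
    (contDiff_gradient hw one_add_one_eq_two.le) (hasCompactSupport_gradient hc),
    ← integral_neg, ← integral_const_mul]
  refine integral_congr_ae <| .of_forall fun x ↦ ?_
  dsimp only
  rw [fderiv_norm_sq_add_rpow_apply hδ, inner_gradient_right, sub_sub_cancel_left]
  simp
  ring

lemma finrank_sub_two_mul_mul_integral_rpow_mul_le (hw : ContDiff ℝ 1 w) (hc : HasCompactSupport w)
    (hw0 : ∀ x, 0 ≤ w x) (hδ : 0 < δ) {p : ℝ} (hp : 0 ≤ p) :
    (finrank ℝ E - 2 * p) * ∫ x, (‖x‖ ^ 2 + δ) ^ (-p) * w x ∂μ ≤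
      -∫ x, (‖x‖ ^ 2 + δ) ^ (-p) * fderiv ℝ w x x ∂μ := by
  have hibp := integral_mul_divergence (μ := μ) (V := fun x ↦ w x • x)
    (contDiff_norm_sq_add_rpow hδ (-p)) (hw.smul contDiff_id) hc.smul_right
  have hdiv (x : E) : divergence (fun x ↦ w x • x) x = finrank ℝ E * w x + fderiv ℝ w x x := by
    rw [divergence_smul (hw.differentiable one_ne_zero x) differentiableAt_fun_id, divergence_id,
      mul_comm]
  have hweight (x : E) : fderiv ℝ (fun x : E ↦ (‖x‖ ^ 2 + δ) ^ (-p)) x (w x • x) =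
      -(2 * p) * ((‖x‖ ^ 2 + δ) ^ (-p - 1) * ‖x‖ ^ 2 * w x) := by
    rw [fderiv_norm_sq_add_rpow_apply hδ, real_inner_smul_right, real_inner_self_eq_norm_sq]
    ring
  have hint_w : Integrable (fun x ↦ (‖x‖ ^ 2 + δ) ^ (-p) * w x) μ :=
    integrable_norm_sq_add_rpow_mul hw.continuous hc hδ _
  have hint_fderiv : Integrable (fun x ↦ (‖x‖ ^ 2 + δ) ^ (-p) * fderiv ℝ w x x) μ :=
    integrable_norm_sq_add_rpow_mul (continuous_fderiv_apply_self hw)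
      (hasCompactSupport_fderiv_apply_self hc) hδ _
  have hle : ∫ x, (‖x‖ ^ 2 + δ) ^ (-p - 1) * ‖x‖ ^ 2 * w x ∂μ ≤
      ∫ x, (‖x‖ ^ 2 + δ) ^ (-p) * w x ∂μ := by
    refine integral_mono_of_nonneg (.of_forall fun x ↦ ?_) hint_w (.of_forall fun x ↦ ?_)
    · exact mul_nonneg (by positivity) (hw0 x)
    · have hs : 0 < ‖x‖ ^ 2 + δ := by positivity
      refine mul_le_mul_of_nonneg_right ?_ (hw0 x)
      rw [Real.rpow_sub_one hs.ne', div_mul_eq_mul_div]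
      exact (mul_div_assoc _ _ _).trans_le <| mul_le_of_le_one_right (by positivity) <|
        div_le_one_of_le₀ (by linarith) hs.le
  simp_rw [hdiv, hweight, mul_add, mul_left_comm _ (finrank ℝ E : ℝ)] at hibp
  rw [integral_add (hint_w.const_mul _) hint_fderiv, integral_const_mul, integral_const_mul] at hibp
  linarith [mul_le_mul_of_nonneg_left hle (by positivity : 0 ≤ 2 * p)]

end NormWeight

/-- The nonlinearities `H` for which the Rellich argument applies to `H ∘ φ`; they are smooth
substitutes for `|t| ^ p`. The last condition says that `H ^ (1 / p)` is convex where `H > 0`. -/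
structure IsRellichProfile (p : ℝ) (H : ℝ → ℝ) : Prop where
  contDiff : ContDiff ℝ 2 H
  map_zero : H 0 = 0
  nonneg (t : ℝ) : 0 ≤ H t
  deriv_deriv_nonneg (t : ℝ) : 0 ≤ deriv (deriv H) t
  sub_one_mul_sq_deriv_le (t : ℝ) : (p - 1) * deriv H t ^ 2 ≤ p * H t * deriv (deriv H) t

section SmoothAbs

/-- A smooth convex approximation of `|t|`, shifted by `ε` so that it vanishes at `0` and
composition with it preserves compact supports. -/
noncomputable def smoothAbs (ε t : ℝ) : ℝ :=
  √(t ^ 2 + ε ^ 2) - ε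

variable {ε : ℝ}

lemma smoothAbs_zero_left (t : ℝ) : smoothAbs 0 t = |t| := by
  simp [smoothAbs, Real.sqrt_sq_eq_abs]

lemma smoothAbs_zero_right (hε : 0 ≤ ε) : smoothAbs ε 0 = 0 := by
  simp [smoothAbs, Real.sqrt_sq hε]

lemma smoothAbs_nonneg (ε t : ℝ) : 0 ≤ smoothAbs ε t :=
  sub_nonneg.2 (Real.le_sqrt_of_sq_le (by linarith [sq_nonneg t]))

lemma continuous_uncurry_smoothAbs : Continuous (Function.uncurry smoothAbs) := by
  unfold smoothAbs
  fun_prop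

lemma continuous_smoothAbs (ε : ℝ) : Continuous (smoothAbs ε) :=
  continuous_uncurry_smoothAbs.comp (Continuous.prodMk_right ε)

lemma smoothAbs_mul_add (ε t : ℝ) :
    smoothAbs ε t * (√(t ^ 2 + ε ^ 2) + ε) = t ^ 2 := by
  rw [smoothAbs, ← sub_eq_zero]
  linear_combination Real.sq_sqrt (show 0 ≤ t ^ 2 + ε ^ 2 by positivity)

lemma smoothAbs_pos (ε : ℝ) {t : ℝ} (ht : t ≠ 0) : 0 < smoothAbs ε t := by
  refine (smoothAbs_nonneg ε t).lt_of_ne' fun h ↦ ht ?_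
  simpa [h] using (smoothAbs_mul_add ε t).symm

lemma hasDerivAt_sqrt_sq_add_sq (hε : ε ≠ 0) (t : ℝ) :
    HasDerivAt (fun t ↦ √(t ^ 2 + ε ^ 2)) (t / √(t ^ 2 + ε ^ 2)) t := by
  have hpos : t ^ 2 + ε ^ 2 ≠ 0 := by positivity
  convert! ((hasDerivAt_pow 2 t).add_const (ε ^ 2)).sqrt hpos using 1
  simp [mul_div_mul_left]

lemma hasDerivAt_smoothAbs (hε : ε ≠ 0) (t : ℝ) :
    HasDerivAt (smoothAbs ε) (t / √(t ^ 2 + ε ^ 2)) t :=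
  (hasDerivAt_sqrt_sq_add_sq hε t).sub_const ε

variable {p : ℝ}

lemma hasDerivAt_smoothAbs_rpow (hε : ε ≠ 0) (hp : 1 ≤ p) (t : ℝ) :
    HasDerivAt (fun t ↦ smoothAbs ε t ^ p)
      (p * smoothAbs ε t ^ (p - 1) * (t / √(t ^ 2 + ε ^ 2))) t := by
  convert! (hasDerivAt_smoothAbs hε t).rpow_const (Or.inr hp) using 1
  ring

lemma deriv_smoothAbs_rpow (hε : ε ≠ 0) (hp : 1 ≤ p) :
    deriv (fun t ↦ smoothAbs ε t ^ p) =
      fun t ↦ p * smoothAbs ε t ^ (p - 1) * (t / √(t ^ 2 + ε ^ 2)) :=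
  deriv_eq (hasDerivAt_smoothAbs_rpow hε hp)

lemma abs_deriv_smoothAbs_rpow_le (hε : ε ≠ 0) (hp : 1 ≤ p) (t : ℝ) :
    |deriv (fun t ↦ smoothAbs ε t ^ p) t| ≤ p * smoothAbs ε t ^ (p - 1) := by
  have hg := Real.rpow_nonneg (smoothAbs_nonneg ε t) (p - 1)
  have hslope : |t / √(t ^ 2 + ε ^ 2)| ≤ 1 := by
    rw [abs_div, abs_of_nonneg (Real.sqrt_nonneg _)]
    exact div_le_one_of_le₀ (Real.abs_le_sqrt (by linarith [sq_nonneg ε])) (Real.sqrt_nonneg _)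
  rw [deriv_smoothAbs_rpow hε hp, abs_mul, abs_of_nonneg (by positivity)]
  exact mul_le_of_le_one_right (by positivity) hslope

lemma hasDerivAt_deriv_smoothAbs_rpow (hε : 0 < ε) (hp : 1 < p) (t : ℝ) :
    HasDerivAt (deriv fun t ↦ smoothAbs ε t ^ p)
      (p * smoothAbs ε t ^ (p - 1) * ((p - 1) * (√(t ^ 2 + ε ^ 2) + ε) / √(t ^ 2 + ε ^ 2) ^ 2 +
        ε ^ 2 / √(t ^ 2 + ε ^ 2) ^ 3)) t := by
  have hr (t : ℝ) : √(t ^ 2 + ε ^ 2) ≠ 0 := by positivity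
  have hpow : Continuous fun t ↦ smoothAbs ε t ^ (p - 1) :=
    (continuous_smoothAbs ε).rpow_const fun _ ↦ Or.inr (by linarith)
  rw [deriv_smoothAbs_rpow hε.ne' hp.le]
  -- The power rule fails at `t = 0` when `p < 2`; there the derivative extends by continuity.
  refine hasDerivAt_of_hasDerivAt_of_ne' (x := 0)
    (g := fun t ↦ p * smoothAbs ε t ^ (p - 1) * ((p - 1) * (√(t ^ 2 + ε ^ 2) + ε) /
      √(t ^ 2 + ε ^ 2) ^ 2 + ε ^ 2 / √(t ^ 2 + ε ^ 2) ^ 3)) (fun t ht ↦ ?_)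
    (by fun_prop (disch := simp)) (by fun_prop (disch := simp [hr])) t
  have hg := smoothAbs_pos ε ht
  have hquot := (hasDerivAt_id' t).div (hasDerivAt_sqrt_sq_add_sq hε.ne' t) (hr t)
  convert! (((hasDerivAt_smoothAbs hε.ne' t).rpow_const (Or.inl hg.ne')).const_mul p).mul hquot
    using 1
  have hr_sq : √(t ^ 2 + ε ^ 2) ^ 2 = t ^ 2 + ε ^ 2 := Real.sq_sqrt (by positivity)
  have hg_mul := smoothAbs_mul_add ε t
  have hpow_sub : smoothAbs ε t ^ (p - 1) = smoothAbs ε t ^ (p - 1 - 1) * smoothAbs ε t := by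
    rw [Real.rpow_sub_one hg.ne' (p - 1), div_mul_cancel₀ _ hg.ne']
  rw [hpow_sub, Pi.div_apply]
  have := hr t
  field_simp
  linear_combination (p - 1) * √(t ^ 2 + ε ^ 2) * hg_mul - smoothAbs ε t * hr_sq

lemma contDiff_two_smoothAbs_rpow (hε : 0 < ε) (hp : 1 < p) :
    ContDiff ℝ 2 fun t ↦ smoothAbs ε t ^ p := by
  have hr (t : ℝ) : √(t ^ 2 + ε ^ 2) ≠ 0 := by positivity
  have hpow : Continuous fun t ↦ smoothAbs ε t ^ (p - 1) :=
    (continuous_smoothAbs ε).rpow_const fun _ ↦ Or.inr (by linarith)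
  have hdd := hasDerivAt_deriv_smoothAbs_rpow hε hp
  rw [← one_add_one_eq_two, contDiff_succ_iff_deriv, contDiff_one_iff_deriv]
  refine ⟨fun t ↦ (hasDerivAt_smoothAbs_rpow hε.ne' hp.le t).differentiableAt, by simp,
    fun t ↦ (hdd t).differentiableAt, ?_⟩
  rw [deriv_eq hdd]
  fun_prop (disch := simp [hr])

lemma isRellichProfile_smoothAbs_rpow (hε : 0 < ε) (hp : 1 < p) :
    IsRellichProfile p fun t ↦ smoothAbs ε t ^ p where
  contDiff := contDiff_two_smoothAbs_rpow hε hp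
  map_zero := by simp [smoothAbs_zero_right hε.le, (zero_lt_one.trans hp).ne']
  nonneg t := Real.rpow_nonneg (smoothAbs_nonneg ε t) p
  deriv_deriv_nonneg t := by
    have hg := smoothAbs_nonneg ε t
    have := sub_pos.2 hp
    rw [(hasDerivAt_deriv_smoothAbs_rpow hε hp t).deriv]
    positivity
  sub_one_mul_sq_deriv_le t := by
    have hg := smoothAbs_nonneg ε t
    have hp0 : p ≠ 0 := by positivity
    have hrest : 0 ≤ (p * smoothAbs ε t ^ (p - 1)) ^ 2 *
        (smoothAbs ε t * (ε ^ 2 / √(t ^ 2 + ε ^ 2) ^ 3)) := by positivity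
    have hpow : smoothAbs ε t ^ p = smoothAbs ε t ^ (p - 1) * smoothAbs ε t := by
      rw [← Real.rpow_add_one' hg (by simpa), sub_add_cancel]
    rw [(hasDerivAt_deriv_smoothAbs_rpow hε hp t).deriv, deriv_smoothAbs_rpow hε.ne' hp.le, mul_pow,
      div_pow, hpow]
    linear_combination hrest - (p - 1) * (p * smoothAbs ε t ^ (p - 1)) ^ 2 /
      √(t ^ 2 + ε ^ 2) ^ 2 * smoothAbs_mul_add ε t

lemma tendsto_rpow_mul_smoothAbs_rpow (hp : 0 ≤ p) {r : ℝ} (hr : 0 < r) (t : ℝ) :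
    Tendsto (fun ε ↦ (r ^ 2 + ε) ^ (-p) * smoothAbs ε t ^ p) (𝓝 0)
      (𝓝 (|t| ^ p / r ^ (2 * p))) := by
  have hlim : |t| ^ p / r ^ (2 * p) = (r ^ 2 + 0) ^ (-p) * smoothAbs 0 t ^ p := by
    rw [smoothAbs_zero_left, add_zero, Real.rpow_neg (sq_nonneg _), Real.rpow_mul hr.le,
      Real.rpow_two, div_eq_inv_mul]
  have hcont : Continuous fun ε ↦ smoothAbs ε t :=
    continuous_uncurry_smoothAbs.comp (Continuous.prodMk_left t)
  rw [hlim]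
  have hbase : Tendsto (fun ε ↦ r ^ 2 + ε) (𝓝 0) (𝓝 (r ^ 2 + 0)) :=
    tendsto_const_nhds.add tendsto_id
  exact (hbase.rpow_const (Or.inl (by positivity))).mul ((hcont.tendsto 0).rpow_const (Or.inr hp))

lemma neg_rpow_mul_deriv_smoothAbs_rpow_mul_le (hε : 0 < ε) (hp : 1 < p) {s k : ℝ} (hs : 0 < s)
    (hk : 0 < k) (t b : ℝ) :
    -(s ^ (1 - p) * (deriv (fun t ↦ smoothAbs ε t ^ p) t * b)) ≤
      (p - 1) * k * (s ^ (-p) * smoothAbs ε t ^ p) + k * (|b| / k) ^ p := by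
  have hdiv (q : ℝ) : (smoothAbs ε t / s) ^ q = s ^ (-q) * smoothAbs ε t ^ q := by
    rw [Real.div_rpow (smoothAbs_nonneg ε t) hs.le, Real.rpow_neg hs.le, div_eq_inv_mul]
  have hderiv := abs_deriv_smoothAbs_rpow_le hε.ne' hp.le t
  calc -(s ^ (1 - p) * (deriv (fun t ↦ smoothAbs ε t ^ p) t * b))
      ≤ |s ^ (1 - p) * (deriv (fun t ↦ smoothAbs ε t ^ p) t * b)| := neg_le_abs _
    _ = s ^ (1 - p) * (|deriv (fun t ↦ smoothAbs ε t ^ p) t| * |b|) := by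
      rw [abs_mul, abs_mul, abs_of_nonneg (Real.rpow_nonneg hs.le _)]
    _ ≤ s ^ (1 - p) * (p * smoothAbs ε t ^ (p - 1) * |b|) := by gcongr
    _ = p * ((smoothAbs ε t / s) ^ (p - 1) * |b|) := by
      rw [hdiv, neg_sub]
      ring
    _ ≤ (p - 1) * k * (s ^ (-p) * smoothAbs ε t ^ p) + k * (|b| / k) ^ p := by
      rw [← hdiv]
      exact young_inequality_rpow_sub_one (div_nonneg (smoothAbs_nonneg ε t) hs.le) (abs_nonneg b)
        hk hp

end SmoothAbs

section Rellich

variable {E : Type*} [NormedAddCommGroup E] [InnerProductSpace ℝ E] {φ : E → ℝ} {p : ℝ}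

lemma IsRellichProfile.integrable_rpow_mul_comp [MeasurableSpace E] [BorelSpace E] {μ : Measure E}
    [IsFiniteMeasureOnCompacts μ] {H : ℝ → ℝ} (hH : IsRellichProfile p H) (hφ : Continuous φ)
    (hc : HasCompactSupport φ) {δ : ℝ} (hδ : 0 < δ) :
    Integrable (fun x ↦ (‖x‖ ^ 2 + δ) ^ (-p) * H (φ x)) μ :=
  integrable_norm_sq_add_rpow_mul (hH.contDiff.continuous.comp hφ) (hc.comp_left hH.map_zero) hδ _

variable [FiniteDimensional ℝ E]

lemma IsRellichProfile.rpow_mul_deriv_mul_laplacian_le {H : ℝ → ℝ} (hH : IsRellichProfile p H)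
    (hφ : ContDiff ℝ 2 φ) {δ : ℝ} (hδ : 0 < δ) (hp : 1 ≤ p) (c : ℝ) (x : E) :
    (‖x‖ ^ 2 + δ) ^ (1 - p) * (deriv H (φ x) * Δ φ x) ≤
      (‖x‖ ^ 2 + δ) ^ (1 - p) * Δ (H ∘ φ) x +
        2 * (p - 1) * c * ((‖x‖ ^ 2 + δ) ^ (-p) * fderiv ℝ (H ∘ φ) x x) +
        p * (p - 1) * c ^ 2 * ((‖x‖ ^ 2 + δ) ^ (-p) * H (φ x)) := by
  have hs : 0 < ‖x‖ ^ 2 + δ := by positivity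
  have hsp : (‖x‖ ^ 2 + δ) ^ (1 - p) = (‖x‖ ^ 2 + δ) ^ (-p) * (‖x‖ ^ 2 + δ) := by
    rw [← Real.rpow_add_one hs.ne', neg_add_eq_sub]
  have hfderiv : fderiv ℝ (H ∘ φ) x x = deriv H (φ x) * fderiv ℝ φ x x := by
    rw [((hH.contDiff.differentiable two_ne_zero _).hasDerivAt.comp_hasFDerivAt x
      (hφ.differentiable two_ne_zero x).hasFDerivAt).fderiv]
    simp
  have hradial : fderiv ℝ φ x x ^ 2 ≤ (‖x‖ ^ 2 + δ) * ‖fderiv ℝ φ x‖ ^ 2 := calc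
    fderiv ℝ φ x x ^ 2 ≤ (‖fderiv ℝ φ x‖ * ‖x‖) ^ 2 :=
      sq_le_sq.2 (((fderiv ℝ φ x).le_opNorm x).trans (le_abs_self _))
    _ ≤ (‖x‖ ^ 2 + δ) * ‖fderiv ℝ φ x‖ ^ 2 := by nlinarith [sq_nonneg ‖fderiv ℝ φ x‖]
  have hquad : 0 ≤ deriv (deriv H) (φ x) * fderiv ℝ φ x x ^ 2 +
      2 * ((p - 1) * c * deriv H (φ x)) * fderiv ℝ φ x x + p * (p - 1) * c ^ 2 * H (φ x) := by
    have := sub_nonneg.2 hp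
    refine quadratic_nonneg_of_sq_le_mul (hH.deriv_deriv_nonneg _)
      (mul_nonneg (by positivity) (hH.nonneg _)) ?_ _
    linear_combination (p - 1) * c ^ 2 * hH.sub_one_mul_sq_deriv_le (φ x)
  have hsecond := mul_le_mul_of_nonneg_left hradial (hH.deriv_deriv_nonneg (φ x))
  rw [laplacian_comp hH.contDiff hφ, hfderiv, hsp]
  linear_combination (‖x‖ ^ 2 + δ) ^ (-p) * hquad + (‖x‖ ^ 2 + δ) ^ (-p) * hsecond

variable [MeasurableSpace E] [BorelSpace E] {μ : Measure E} [μ.IsAddHaarMeasure]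

lemma IsRellichProfile.integrable_rpow_mul_deriv_mul_laplacian {H : ℝ → ℝ}
    (hH : IsRellichProfile p H) (hφ : ContDiff ℝ 2 φ) (hc : HasCompactSupport φ) {δ : ℝ}
    (hδ : 0 < δ) :
    Integrable (fun x ↦ (‖x‖ ^ 2 + δ) ^ (1 - p) * (deriv H (φ x) * Δ φ x)) μ :=
  integrable_norm_sq_add_rpow_mul
    (((hH.contDiff.continuous_deriv one_le_two).comp hφ.continuous).mul (continuous_laplacian hφ))
    (hasCompactSupport_laplacian hc).mul_left hδ _

lemma IsRellichProfile.integral_rpow_mul_deriv_mul_laplacian_le {H : ℝ → ℝ}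
    (hH : IsRellichProfile p H) (hφ : ContDiff ℝ 2 φ) (hc : HasCompactSupport φ) {δ : ℝ}
    (hδ : 0 < δ) (hp : 1 ≤ p) (c : ℝ) :
    ∫ x, (‖x‖ ^ 2 + δ) ^ (1 - p) * (deriv H (φ x) * Δ φ x) ∂μ ≤
      2 * (p - 1) * (1 + c) * ∫ x, (‖x‖ ^ 2 + δ) ^ (-p) * fderiv ℝ (H ∘ φ) x x ∂μ +
        p * (p - 1) * c ^ 2 * ∫ x, (‖x‖ ^ 2 + δ) ^ (-p) * H (φ x) ∂μ := by
  have hw : ContDiff ℝ 2 (H ∘ φ) := hH.contDiff.comp hφ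
  have hwc : HasCompactSupport (H ∘ φ) := hc.comp_left hH.map_zero
  have hint_lap : Integrable (fun x ↦ (‖x‖ ^ 2 + δ) ^ (1 - p) * Δ (H ∘ φ) x) μ :=
    integrable_norm_sq_add_rpow_mul (continuous_laplacian hw)
      (hasCompactSupport_laplacian hwc) hδ _
  have hint_fderiv : Integrable (fun x ↦ (‖x‖ ^ 2 + δ) ^ (-p) * fderiv ℝ (H ∘ φ) x x) μ :=
    integrable_norm_sq_add_rpow_mul (continuous_fderiv_apply_self (hw.of_le one_le_two))
      (hasCompactSupport_fderiv_apply_self hwc) hδ _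
  have hint_comp := hH.integrable_rpow_mul_comp (μ := μ) hφ.continuous hc hδ
  have hmono := integral_mono (hH.integrable_rpow_mul_deriv_mul_laplacian hφ hc hδ)
    ((hint_lap.add (hint_fderiv.const_mul (2 * (p - 1) * c))).add
      (hint_comp.const_mul (p * (p - 1) * c ^ 2)))
    (hH.rpow_mul_deriv_mul_laplacian_le hφ hδ hp c)
  rw [integral_add' (hint_lap.add (hint_fderiv.const_mul _)) (hint_comp.const_mul _),
    integral_add' hint_lap (hint_fderiv.const_mul _), integral_const_mul, integral_const_mul,
    integral_rpow_mul_laplacian hw hwc hδ] at hmono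
  linear_combination hmono

lemma IsRellichProfile.mul_integral_rpow_mul_comp_le {H : ℝ → ℝ} (hH : IsRellichProfile p H)
    (hφ : ContDiff ℝ 2 φ) (hc : HasCompactSupport φ) {δ : ℝ} (hδ : 0 < δ) (hp : 1 ≤ p)
    (hpN : p ≤ finrank ℝ E) :
    p * (finrank ℝ E * (p - 1) * (finrank ℝ E - 2 * p) / p ^ 2) *
        ∫ x, (‖x‖ ^ 2 + δ) ^ (-p) * H (φ x) ∂μ ≤
      -∫ x, (‖x‖ ^ 2 + δ) ^ (1 - p) * (deriv H (φ x) * Δ φ x) ∂μ := by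
  have hp0 : 0 < p := by positivity
  -- The final constant is a quadratic polynomial in `c`, and this `c` maximises it.
  obtain ⟨c, hN⟩ : ∃ c : ℝ, (finrank ℝ E : ℝ) = p * (c + 2) :=
    ⟨(finrank ℝ E - 2 * p) / p, by field_simp; ring⟩
  have hc1 : 0 ≤ 1 + c := nonneg_of_mul_nonneg_right (by linarith : 0 ≤ p * (1 + c)) hp0
  have hradial := finrank_sub_two_mul_mul_integral_rpow_mul_le (μ := μ)
    ((hH.contDiff.comp hφ).of_le one_le_two) (hc.comp_left hH.map_zero) (fun x ↦ hH.nonneg _)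
    hδ hp0.le
  have hcoeff : 0 ≤ 2 * (p - 1) * (1 + c) := mul_nonneg (by linarith) hc1
  have hconst : p * (finrank ℝ E * (p - 1) * (finrank ℝ E - 2 * p) / p ^ 2) =
      p * (p - 1) * c * (c + 2) := by
    rw [hN]
    field_simp
    ring
  rw [hN] at hradial
  simp only [Function.comp_apply] at hradial
  rw [hconst]
  linear_combination hH.integral_rpow_mul_deriv_mul_laplacian_le (μ := μ) hφ hc hδ hp c +
    2 * (p - 1) * (1 + c) * hradial

lemma integral_rpow_mul_smoothAbs_rpow_le (hφ : ContDiff ℝ 2 φ) (hc : HasCompactSupport φ) {ε δ : ℝ}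
    (hε : 0 < ε) (hδ : 0 < δ) (hp : 1 < p) (hpN : 2 * p < finrank ℝ E) :
    ∫ x, (‖x‖ ^ 2 + δ) ^ (-p) * smoothAbs ε (φ x) ^ p ∂μ ≤
      (p ^ 2 / (finrank ℝ E * (p - 1) * (finrank ℝ E - 2 * p))) ^ p * ∫ x, |Δ φ x| ^ p ∂μ := by
  set K : ℝ := finrank ℝ E * (p - 1) * (finrank ℝ E - 2 * p) / p ^ 2 with hK_def
  have hK : 0 < K := by
    have hN : 0 < (finrank ℝ E : ℝ) := by linarith
    have := sub_pos.2 hp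
    have := sub_pos.2 hpN
    positivity
  have hH := isRellichProfile_smoothAbs_rpow hε hp
  have hint_smoothAbs := hH.integrable_rpow_mul_comp (μ := μ) hφ.continuous hc hδ
  have hint_lap : Integrable (fun x ↦ (|Δ φ x| / K) ^ p) μ :=
    (((continuous_laplacian hφ).abs.div_const K).rpow_const fun _ ↦
      Or.inr (by linarith)).integrable_of_hasCompactSupport
      ((hasCompactSupport_laplacian hc).comp_left (g := fun t ↦ (|t| / K) ^ p)
        (by simp [(zero_lt_one.trans hp).ne']))
  have hyoung := integral_mono (hH.integrable_rpow_mul_deriv_mul_laplacian (μ := μ) hφ hc hδ).neg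
    ((hint_smoothAbs.const_mul ((p - 1) * K)).add (hint_lap.const_mul K)) fun x ↦
      neg_rpow_mul_deriv_smoothAbs_rpow_mul_le hε hp (by positivity : 0 < ‖x‖ ^ 2 + δ) hK (φ x)
        (Δ φ x)
  rw [integral_neg', integral_add' (hint_smoothAbs.const_mul _) (hint_lap.const_mul _),
    integral_const_mul, integral_const_mul] at hyoung
  have hprofile :=
    (hH.mul_integral_rpow_mul_comp_le (μ := μ) hφ hc hδ hp.le (by linarith)).trans hyoung
  have hscale : ∫ x, (|Δ φ x| / K) ^ p ∂μ =
      (p ^ 2 / (finrank ℝ E * (p - 1) * (finrank ℝ E - 2 * p))) ^ p * ∫ x, |Δ φ x| ^ p ∂μ := by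
    rw [← integral_const_mul]
    refine integral_congr_ae <| .of_forall fun x ↦ ?_
    dsimp only
    rw [div_eq_inv_mul, Real.mul_rpow (inv_nonneg.2 hK.le) (abs_nonneg _), hK_def, inv_div]
  rw [← hscale]
  refine le_of_mul_le_mul_left ?_ hK
  linear_combination hprofile

theorem rellich_inequality_general (hφ : ContDiff ℝ 2 φ) (hsupp : HasCompactSupport φ)
    (hp : 1 < p) (hpN : 2 * p < finrank ℝ E) :
    Integrable (fun x ↦ |φ x| ^ p / ‖x‖ ^ (2 * p)) μ ∧
      ∫ x, |φ x| ^ p / ‖x‖ ^ (2 * p) ∂μ ≤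
        (p ^ 2 / (finrank ℝ E * (p - 1) * (finrank ℝ E - 2 * p))) ^ p * ∫ x, |Δ φ x| ^ p ∂μ := by
  have : Nontrivial E := nontrivial_of_finrank_pos (R := ℝ) <| by
    exact_mod_cast (by linarith : (0 : ℝ) < finrank ℝ E)
  have hpos (n : ℕ) : (0 : ℝ) < 1 / (n + 1) := Nat.one_div_pos_of_nat
  refine integrable_and_integral_le_of_tendsto_of_integral_le
    (f := fun n x ↦ (‖x‖ ^ 2 + 1 / (n + 1)) ^ (-p) * smoothAbs (1 / (n + 1)) (φ x) ^ p)
    (fun n ↦ (isRellichProfile_smoothAbs_rpow (hpos n) hp).integrable_rpow_mul_comp hφ.continuous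
      hsupp (hpos n)) (fun n x ↦ ?_) ?_
    fun n ↦ integral_rpow_mul_smoothAbs_rpow_le hφ hsupp (hpos n) (hpos n) hp hpN
  · have := smoothAbs_nonneg (1 / (n + 1)) (φ x)
    positivity
  · filter_upwards [μ.ae_ne 0] with x hx
    exact (tendsto_rpow_mul_smoothAbs_rpow (by linarith) (norm_pos_iff.2 hx) (φ x)).comp
      tendsto_one_div_add_atTop_nhds_zero_nat

end Rellich

lemma lap_eq_laplacian {N : ℕ} (φ : EuclideanSpace ℝ (Fin N) → ℝ) : lap φ = Δ φ := by
  ext x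
  simp [lap, laplacian_eq_iteratedFDeriv_orthonormalBasis φ (EuclideanSpace.basisFun (Fin N) ℝ)]

/-- Rellich inequality on `ℝ^N` for smooth compactly supported functions. -/
theorem rellich_inequality (N : ℕ) (hN : 0 < N) (p : ℝ) (hp : 1 < p)
    (hpN : 2 * p < (N : ℝ))
    (φ : EuclideanSpace ℝ (Fin N) → ℝ) (hφ : ContDiff ℝ (⊤ : ℕ∞) φ)
    (hsupp : HasCompactSupport φ) :
    ∫ x : EuclideanSpace ℝ (Fin N), |φ x| ^ p / ‖x‖ ^ (2 * p) ≤
      (p ^ 2 / ((N : ℝ) * (p - 1) * ((N : ℝ) - 2 * p))) ^ p *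
        ∫ x : EuclideanSpace ℝ (Fin N), |lap φ x| ^ p := by
  simpa [lap_eq_laplacian] using (rellich_inequality_general (μ := volume)
    (hφ.of_le (WithTop.coe_le_coe.mpr le_top)) hsupp hp (by simpa using hpN)).2
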